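/- For every natural number d ≥ 2 there exists a real constant K_d > 0 such that for all natural numbers p ≥ 1 and g, setting n = 2p, if g ≤ (2 + n(d−1))/4 then 3^{4n} · (n−1)! · 4^{n+1} · (2g)! / (p!)² ≤ K_d^n · n^{2g}. -/

import Mathlib

theorem factorial_two_mul_sub_one_le (p : ℕ) :
    (2 * p - 1).factorial ≤ 4 ^ (2 * p) * p.factorial ^ 2 := by
  have hfact : (2 * p).factorial = p.centralBinom * p.factorial ^ 2 := by
    have h := Nat.choose_mul_factorial_mul_factorial (show p ≤ 2 * p by omega)
    rw [show 2 * p - p = p by omega] at h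
    rw [← h, Nat.centralBinom]
    ring
  have hbinom : p.centralBinom ≤ 4 ^ (2 * p) :=
    calc p.centralBinom ≤ 2 ^ (2 * p) := Nat.choose_le_two_pow _ _
      _ ≤ 4 ^ (2 * p) := Nat.pow_le_pow_left (by norm_num) _
  calc (2 * p - 1).factorial ≤ (2 * p).factorial := Nat.factorial_le (Nat.sub_le _ _)
    _ = p.centralBinom * p.factorial ^ 2 := hfact
    _ ≤ _ := Nat.mul_le_mul_right _ hbinom

theorem factorial_le_of_le_mul {d n m : ℕ} (hd : 1 ≤ d) (hm : m ≤ d * n) :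
    m.factorial ≤ (d ^ d) ^ n * n ^ m :=
  calc m.factorial ≤ m ^ m := Nat.factorial_le_pow m
    _ ≤ (d * n) ^ m := Nat.pow_le_pow_left hm m
    _ = d ^ m * n ^ m := mul_pow _ _ _
    _ ≤ d ^ (d * n) * n ^ m := Nat.mul_le_mul_right _ (Nat.pow_le_pow_right hd hm)
    _ = (d ^ d) ^ n * n ^ m := by rw [pow_mul]

/-- For every `d ≥ 2` there is a constant `K_d > 0` such that for all `p ≥ 1` and all `g`
with `g ≤ (2 + n(d-1))/4` where `n = 2p`, one has
`3^(4n) * (n-1)! * 4^(n+1) * (2g)! / (p!)^2 ≤ K_d^n * n^(2g)`. -/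
theorem wick_contraction_bound (d : ℕ) (hd : 2 ≤ d) :
    ∃ K : ℝ, 0 < K ∧ ∀ p g : ℕ, 1 ≤ p →
      (g : ℝ) ≤ (2 + (2 * p : ℕ) * ((d : ℝ) - 1)) / 4 →
      (3 : ℝ) ^ (4 * (2 * p)) * (Nat.factorial (2 * p - 1) : ℝ) * (4 : ℝ) ^ (2 * p + 1) *
          (Nat.factorial (2 * g) : ℝ) / ((Nat.factorial p : ℝ)) ^ 2 ≤
        K ^ (2 * p) * ((2 * p : ℕ) : ℝ) ^ (2 * g) := by
  refine ⟨((3 ^ 4 * 4 * 4 ^ 2 * d ^ d : ℕ) : ℝ), by positivity, fun p g hp hg => ?_⟩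
  have hgd : 2 * g ≤ d * (2 * p) := by
    have hp' : (1 : ℝ) ≤ p := by exact_mod_cast hp
    have hpd : (0 : ℝ) ≤ d * p := by positivity
    have : (2 * g : ℝ) ≤ d * (2 * p) := by
      push_cast at hg
      linarith
    exact_mod_cast this
  rw [div_le_iff₀ (by positivity)]
  have key : 3 ^ (4 * (2 * p)) * (2 * p - 1).factorial * 4 ^ (2 * p + 1) * (2 * g).factorial ≤
      (3 ^ 4 * 4 * 4 ^ 2 * d ^ d) ^ (2 * p) * (2 * p) ^ (2 * g) * p.factorial ^ 2 :=
    calc _ ≤ 3 ^ (4 * (2 * p)) * (4 ^ (2 * p) * p.factorial ^ 2) * 4 ^ (2 * (2 * p)) *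
          ((d ^ d) ^ (2 * p) * (2 * p) ^ (2 * g)) := by
          gcongr
          · exact factorial_two_mul_sub_one_le p
          · norm_num
          · omega
          · exact factorial_le_of_le_mul (by omega) hgd
      _ = _ := by
          rw [pow_mul 3 4, pow_mul 4 2 (2 * p), mul_pow _ (d ^ d), mul_pow _ (4 ^ 2), mul_pow (3 ^ 4)]
          ring
  exact_mod_cast key
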